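/- Let Q, R, H and K be as in the Kalman gain setup. Then (Q⁻¹ + Hᵀ R⁻¹ H)⁻¹ Hᵀ R⁻¹ = K. -/

import Mathlib

open Matrix

section PushThrough

variable {ι κ α : Type*} [Fintype ι] [DecidableEq ι] [Fintype κ] [DecidableEq κ] [CommRing α]
  {Q : Matrix ι ι α} {R : Matrix κ κ α} {U : Matrix ι κ α} {V : Matrix κ ι α}

theorem inv_add_mul_inv_mul_mul_mul (hQ : IsUnit Q) (hR : IsUnit R) :
    (Q⁻¹ + U * R⁻¹ * V) * (Q * U) = U * R⁻¹ * (V * Q * U + R) := by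
  rw [isUnit_iff_isUnit_det] at hQ hR
  calc (Q⁻¹ + U * R⁻¹ * V) * (Q * U)
      = U + U * R⁻¹ * V * (Q * U) := by
        rw [Matrix.add_mul, nonsing_inv_mul_cancel_left _ _ hQ]
    _ = U * R⁻¹ * (V * Q * U) + U := by
        simp only [Matrix.mul_assoc, add_comm]
    _ = U * R⁻¹ * (V * Q * U + R) := by
        rw [Matrix.mul_add, nonsing_inv_mul_cancel_right _ _ hR]

theorem isUnit_inv_add_mul_inv_mul (hQ : IsUnit Q) (hR : IsUnit R)
    (hS : IsUnit (V * Q * U + R)) : IsUnit (Q⁻¹ + U * R⁻¹ * V) := by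
  obtain ⟨_⟩ := hQ.nonempty_invertible
  obtain ⟨_⟩ := hR.nonempty_invertible
  have hSchur : IsUnit (⅟(⅟R) + V * ⅟(⅟Q) * U) := by
    simpa only [invOf_invOf, add_comm] using hS
  obtain ⟨_⟩ := hSchur.nonempty_invertible
  let _ := invertibleAddMulMul (⅟Q) U (⅟R) V
  simpa only [invOf_eq_nonsing_inv] using isUnit_of_invertible (⅟Q + U * ⅟R * V)

theorem stmt_8_general (hQ : IsUnit Q) (hR : IsUnit R) (hS : IsUnit (V * Q * U + R)) :
    (Q⁻¹ + U * R⁻¹ * V)⁻¹ * U * R⁻¹ = Q * U * (V * Q * U + R)⁻¹ := by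
  have hA := (isUnit_iff_isUnit_det _).mp (isUnit_inv_add_mul_inv_mul hQ hR hS)
  rw [isUnit_iff_isUnit_det] at hS
  calc (Q⁻¹ + U * R⁻¹ * V)⁻¹ * U * R⁻¹
      = (Q⁻¹ + U * R⁻¹ * V)⁻¹ * (U * R⁻¹ * (V * Q * U + R)) * (V * Q * U + R)⁻¹ := by
        rw [← Matrix.mul_assoc, mul_nonsing_inv_cancel_right _ _ hS, Matrix.mul_assoc]
    _ = (Q⁻¹ + U * R⁻¹ * V)⁻¹ * ((Q⁻¹ + U * R⁻¹ * V) * (Q * U)) * (V * Q * U + R)⁻¹ := by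
        rw [inv_add_mul_inv_mul_mul_mul hQ hR]
    _ = Q * U * (V * Q * U + R)⁻¹ := by
        rw [nonsing_inv_mul_cancel_left _ _ hA]

end PushThrough

theorem posDef_mul_mul_conjTranspose_add {ι κ α : Type*} [Fintype ι] [Finite κ] [Ring α]
    [PartialOrder α] [StarRing α] [AddLeftMono α] {Q : Matrix ι ι α} {R : Matrix κ κ α}
    (hQ : Q.PosSemidef) (hR : R.PosDef) (H : Matrix κ ι α) : (H * Q * Hᴴ + R).PosDef :=
  .posSemidef_add (hQ.mul_mul_conjTranspose_same H) hR

/-- In the Kalman gain setup,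
`(Q⁻¹ + Hᵀ R⁻¹ H)⁻¹ Hᵀ R⁻¹ = K`. -/
theorem stmt_8 (n m : ℕ) (hn : 0 < n) (hm : 0 < m)
    (Q : Matrix (Fin n) (Fin n) ℝ) (R : Matrix (Fin m) (Fin m) ℝ)
    (H : Matrix (Fin m) (Fin n) ℝ) (K : Matrix (Fin n) (Fin m) ℝ)
    (hQ : Q.PosDef) (hR : R.PosDef)
    (hK : K = Q * Hᵀ * (H * Q * Hᵀ + R)⁻¹) :
    (Q⁻¹ + Hᵀ * R⁻¹ * H)⁻¹ * Hᵀ * R⁻¹ = K := by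
  have hS : (H * Q * Hᵀ + R).PosDef := by
    simpa only [conjTranspose_eq_transpose_of_trivial] using
      posDef_mul_mul_conjTranspose_add hQ.posSemidef hR H
  rw [hK, stmt_8_general hQ.isUnit hR.isUnit hS.isUnit]
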